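/- Let 1 < p < ∞, -1 < α < ∞, and let K ≥ 0 be an integer. Suppose f ∈ A^p_α is such that D_θ^K f ∈ A^p_α, and let ω_{p,α}(δ, D_θ^K f) = sup_{0 ≤ t ≤ δ} ‖(D_θ^K f)(e^{it}·) - (D_θ^K f)(·)‖_{p,α} be the A^p_α modulus of continuity of D_θ^K f. Define h(t) = (cos t - cos 2t)/2, H_0(t) = h(t)/t², H_k(t) = ∫_t^∞ H_{k-1}(x) dx for k ≥ 1, C_k = (4/π) ∫_0^∞ |H_k(t)| dt, and B_K = 2^K C_{K+1}/π + 2^K C_K. Then for every n ≥ 1, E_n^{p,α}(f) ≤ B_K · ω_{p,α}(2π/n, D_θ^K f) · n^{-K}. -/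

import Mathlib

/-!
Put `h = 2π/n` and let `f_h` be the average of the rotations `f(e^{it}·)` over `0 ≤ t ≤ h`. Write
`f = f_h + (f - f_h)` and approximate the two summands separately.

* Rotations are isometries of `A^p_α`, so `D_θ^K (f - f_h)`, an average of the increments
  `D_θ^K f - (D_θ^K f)(e^{it}·)`, has norm at most `ω(h)` (`eN_avg_sub_le`).
* `D_θ^{K+1} f_h` is the difference quotient `((D_θ^K f)(e^{ih}·) - D_θ^K f) / h`, of norm at most
  `ω(h) / h` (`avg_mul`).
* A function `g` with `D_θ^k g = G ∈ A^p_α` satisfies `E_n(g) ≤ C_k (2/n)^k ‖G‖` (`exists_poly`).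

With `k = K` and `k = K + 1` these give the coefficient
`C_{K+1} (2/n)^{K+1} n / (2π) + C_K (2/n)^K = B_K n^{-K}`.

The third estimate rests on the cosine transform of `H_0`, which is a trapezoid: constant on
`[-1, 1]` and zero outside `[-2, 2]` (`FH_zero`). Used as a Taylor multiplier at scale `2/n` it
produces a polynomial of degree less than `n`. Since `H_{k+1}' = -H_k`, repeated integration by parts
(`FH_formula`) shows that the error of this approximation is a
multiple of the convolution of `G` with `H_k`, `k ≥ 1`; the boundary terms vanish because the trapezoid is flat near `0`. Minkowski's inequality
(`eN_integral_le`) then bounds the error by `C_k (2/n)^k ‖G‖`. For `k = 0` the zero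
polynomial and `C_0 ≥ 1` suffice (`one_le_Cc_zero`). Integrability of `H_k` comes from
`|H_k(t)| ≤ 1/t²` (`abs_Hf_le`), seen by writing `cos (at) / t²` as the real part of
`∫₀^∞ s e^{-t(s - ia)} ds`: each integration over `(t, ∞)` divides the integrand by `s - ia`, and
`|s - ia| ≥ 1`.
-/

open MeasureTheory Complex Set Metric

noncomputable section

/-- The open unit disc in `ℂ`. -/
def unitDisc : Set ℂ := Metric.ball 0 1

/-- The density of the weighted measure `dA_α = (α+1) π⁻¹ (1-|z|²)^α dA`
with respect to area measure. -/
def wt (α : ℝ) (z : ℂ) : ℝ := (α + 1) / Real.pi * (1 - ‖z‖ ^ 2) ^ α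

/-- The norm `‖f‖_{p,α}` of the weighted Bergman space `A^p_α`. -/
def bNorm (p α : ℝ) (f : ℂ → ℂ) : ℝ :=
  (∫ z in unitDisc, ‖f z‖ ^ p * wt α z) ^ (1 / p)

/-- Membership in the weighted Bergman space `A^p_α`: analytic on the unit disc
with finite weighted `p`-norm. -/
def MemAp (p α : ℝ) (f : ℂ → ℂ) : Prop :=
  DifferentiableOn ℂ f unitDisc ∧
    IntegrableOn (fun z => ‖f z‖ ^ p * wt α z) unitDisc

/-- `E_n^{p,α}(f)`: the distance from `f` to the polynomials of degree at most `n`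
in the `A^p_α` norm. -/
def polyErr (p α : ℝ) (n : ℕ) (f : ℂ → ℂ) : ℝ :=
  sInf {e | ∃ P : Polynomial ℂ, P.natDegree ≤ n ∧
    e = bNorm p α fun z => f z - P.eval z}

/-- The functions `H_k`: `H_0(t) = h(t)/t²` with `h(t) = (cos t - cos 2t)/2`, and
`H_k(t) = ∫_t^∞ H_{k-1}(x) dx`. -/
def Hf : ℕ → ℝ → ℝ
  | 0, t => ((Real.cos t - Real.cos (2*t)) / 2) / t ^ 2
  | (k+1), t => ∫ x in Set.Ioi t, Hf k x

/-- The constants `C_k = (4/π) ∫_0^∞ |H_k(t)| dt`. -/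
def Cc (k : ℕ) : ℝ := 4 / Real.pi * ∫ t in Set.Ioi (0:ℝ), |Hf k t|

/-- The angular derivative `D_θ f (z) = i z f'(z)`. -/
def Dth (f : ℂ → ℂ) : ℂ → ℂ := fun z => Complex.I * z * deriv f z

/-- The `A^p_α` modulus of continuity
`ω_{p,α}(δ, f) = sup_{0 ≤ t ≤ δ} ‖f(e^{it}·) - f(·)‖_{p,α}`. -/
def modCont (p α δ : ℝ) (f : ℂ → ℂ) : ℝ :=
  sSup {r | ∃ t : ℝ, 0 ≤ t ∧ t ≤ δ ∧
    r = bNorm p α fun z => f (Complex.exp (t * Complex.I) * z) - f z}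

/-- The constant `B_K = 2^K C_{K+1}/π + 2^K C_K`. -/
def Bcoef (K : ℕ) : ℝ := 2 ^ K * Cc (K + 1) / Real.pi + 2 ^ K * Cc K

/-! ### Tail integrals: Laplace representation and decay -/

lemma integral_mul_exp_neg {t : ℝ} (ht : 0 < t) :
    IntegrableOn (fun s : ℝ => s * Real.exp (-(t * s))) (Ioi 0) ∧
      ∫ s in Ioi (0:ℝ), s * Real.exp (-(t * s)) = 1 / t ^ 2 := by
  have h := Real.integral_rpow_mul_exp_neg_mul_Ioi (a := 2) (r := t) (by norm_num) ht
  have h2 : ∫ s in Ioi (0:ℝ), s * Real.exp (-(t * s)) = 1 / t ^ 2 := by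
    rw [show (2:ℝ) - 1 = 1 by norm_num] at h
    simp only [Real.rpow_one, Real.Gamma_two, mul_one] at h
    rw [h]; norm_num
  refine ⟨?_, h2⟩
  by_contra hc
  rw [IntegrableOn] at hc
  rw [integral_undef hc] at h2
  have : 0 < 1 / t ^ 2 := by positivity
  linarith

/-- The integrand of the Laplace representation
`cos (a t) / t² = Re ∫₀^∞ s e^{-t(s - ia)} ds`, after `k` integrations from `t` to `∞`. -/
def lapK (k : ℕ) (a t s : ℝ) : ℂ :=
  s * cexp (-(t * (s - a * I))) / (s - a * I) ^ k

/-- The `k`-fold iterated tail integral of `e^{iat} / t²`. -/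
def lap (k : ℕ) (a t : ℝ) : ℂ := ∫ s in Ioi (0:ℝ), lapK k a t s

lemma one_le_norm_sub {a : ℝ} (ha : 1 ≤ a) (s : ℝ) : 1 ≤ ‖(s - a * I : ℂ)‖ := by
  have := Complex.abs_im_le_norm (s - a * I : ℂ)
  simp at this
  exact ha.trans ((le_abs_self a).trans this)

lemma norm_lapK_le (k : ℕ) {a : ℝ} (ha : 1 ≤ a) (t : ℝ) {s : ℝ} (hs : 0 < s) :
    ‖lapK k a t s‖ ≤ s * Real.exp (-(t * s)) := by
  unfold lapK
  rw [norm_div, norm_mul, norm_pow, Complex.norm_exp]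
  have h1 : (-(t * (s - a * I)) : ℂ).re = -(t * s) := by simp
  rw [h1, Complex.norm_real, Real.norm_of_nonneg hs.le]
  exact div_le_self (by positivity) (one_le_pow₀ (one_le_norm_sub ha s))

lemma lapK_cont (k : ℕ) {a : ℝ} (ha : 1 ≤ a) :
    Continuous (fun q : ℝ × ℝ => lapK k a q.1 q.2) := by
  unfold lapK
  refine Continuous.div (by fun_prop) (by fun_prop) fun q => ?_
  have := one_le_norm_sub ha q.2
  refine pow_ne_zero _ fun h => ?_
  rw [h] at this; norm_num at this

lemma lapK_integrable (k : ℕ) {a : ℝ} (ha : 1 ≤ a) {t : ℝ} (ht : 0 < t) :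
    IntegrableOn (lapK k a t) (Ioi 0) := by
  refine Integrable.mono' (integral_mul_exp_neg ht).1 ?_ ?_
  · exact ((lapK_cont k ha).comp (Continuous.prodMk_right t)).aestronglyMeasurable
  · exact (ae_restrict_iff' measurableSet_Ioi).2 (.of_forall fun s hs => norm_lapK_le k ha t hs)

lemma norm_lap_le (k : ℕ) {a : ℝ} (ha : 1 ≤ a) {t : ℝ} (ht : 0 < t) :
    ‖lap k a t‖ ≤ 1 / t ^ 2 := by
  rw [← (integral_mul_exp_neg ht).2]
  exact norm_integral_le_of_norm_le (integral_mul_exp_neg ht).1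
    ((ae_restrict_iff' measurableSet_Ioi).2 (.of_forall fun s hs => norm_lapK_le k ha t hs))

lemma integrableOn_inv_sq {t : ℝ} (ht : 0 < t) :
    IntegrableOn (fun x : ℝ => 1 / x ^ 2) (Ioi t) := by
  refine (integrableOn_Ioi_rpow_of_lt (a := -2) (by norm_num) ht).congr_fun (fun x hx => ?_)
    measurableSet_Ioi
  have hx : 0 < x := ht.trans hx
  simp only [one_div]
  rw [Real.rpow_neg hx.le]; norm_num

lemma lapK_integrable_prod (k : ℕ) {a : ℝ} (ha : 1 ≤ a) {t : ℝ} (ht : 0 < t) :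
    Integrable (fun q : ℝ × ℝ => lapK k a q.1 q.2)
      ((volume.restrict (Ioi t)).prod (volume.restrict (Ioi 0))) := by
  rw [integrable_prod_iff (lapK_cont k ha).aestronglyMeasurable]
  constructor
  · exact (ae_restrict_iff' measurableSet_Ioi).2
      (.of_forall fun x hx => lapK_integrable k ha (ht.trans hx))
  · refine Integrable.mono' (integrableOn_inv_sq ht) ?_ ?_
    · exact ((lapK_cont k ha).norm.aestronglyMeasurable
        (μ := (volume.restrict (Ioi t)).prod (volume.restrict (Ioi 0)))).integral_prod_right'
    · refine (ae_restrict_iff' measurableSet_Ioi).2 (.of_forall fun x hx => ?_)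
      have hx : 0 < x := ht.trans hx
      rw [Real.norm_of_nonneg (integral_nonneg fun _ => norm_nonneg _),
        ← (integral_mul_exp_neg hx).2]
      exact integral_mono_ae (lapK_integrable k ha hx).norm (integral_mul_exp_neg hx).1
        ((ae_restrict_iff' measurableSet_Ioi).2 (.of_forall fun s hs => norm_lapK_le k ha x hs))

lemma lap_integrable (k : ℕ) {a : ℝ} (ha : 1 ≤ a) {t : ℝ} (ht : 0 < t) :
    IntegrableOn (lap k a) (Ioi t) := (lapK_integrable_prod k ha ht).integral_prod_left

lemma integral_lap (k : ℕ) {a : ℝ} (ha : 1 ≤ a) {t : ℝ} (ht : 0 < t) :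
    ∫ x in Ioi t, lap k a x = lap (k + 1) a t := by
  unfold lap
  rw [integral_integral_swap (f := fun x s => lapK k a x s) (lapK_integrable_prod k ha ht)]
  refine setIntegral_congr_fun measurableSet_Ioi fun s hs => ?_
  have hs : 0 < s := hs
  have h := integral_exp_mul_complex_Ioi (a := -(s - a * I)) (by simpa using hs) t
  have hne : (s - a * I : ℂ) ≠ 0 := fun h => by
    have := one_le_norm_sub ha s
    rw [h] at this; norm_num at this
  have e : ∀ x : ℝ, lapK k a x s = s / (s - a * I) ^ k * cexp (-(s - a * I) * x) := by
    intro x; unfold lapK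
    rw [show -((x:ℂ) * (s - a * I)) = -(s - a * I) * x by ring]; ring
  simp only [e]
  rw [integral_const_mul, h]
  unfold lapK
  rw [show -((t:ℂ) * (s - a * I)) = -(s - a * I) * t by ring]
  field_simp
  ring

lemma lap_zero (a : ℝ) {t : ℝ} (ht : 0 < t) : (lap 0 a t).re = Real.cos (a * t) / t ^ 2 := by
  have e : ∀ s : ℝ, lapK 0 a t s = cexp (t * a * I) * ((s * Real.exp (-(t * s)) : ℝ) : ℂ) := by
    intro s
    unfold lapK
    rw [show -((t:ℂ) * (s - a * I)) = t * a * I + ((-(t * s) : ℝ) : ℂ) by push_cast; ring,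
      Complex.exp_add]
    push_cast; ring
  unfold lap
  simp only [e]
  rw [integral_const_mul, integral_complex_ofReal, (integral_mul_exp_neg ht).2, re_mul_ofReal,
    show ((t:ℂ) * a * I) = ((t * a : ℝ) : ℂ) * I by push_cast; ring, Complex.exp_ofReal_mul_I_re,
    mul_comm t a]
  ring

/-- Laplace representation of `H_k` on the positive half line. -/
lemma Hf_eq_lap (k : ℕ) : ∀ {t : ℝ}, 0 < t → Hf k t = ((lap k 1 t).re - (lap k 2 t).re) / 2 := by
  induction k with
  | zero =>
    intro t ht
    rw [lap_zero 1 ht, lap_zero 2 ht, Hf]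
    ring_nf
  | succ k ih =>
    intro t ht
    have h := integral_sub (lap_integrable k le_rfl ht).re (lap_integrable k one_le_two ht).re
    simp only [RCLike.re_to_complex] at h
    rw [Hf, setIntegral_congr_fun measurableSet_Ioi (fun x hx => ih (ht.trans hx)),
      integral_div, h, ← integral_lap k le_rfl ht, ← integral_lap k one_le_two ht]
    congr 2
    · exact integral_re (lap_integrable k le_rfl ht)
    · exact integral_re (lap_integrable k one_le_two ht)

lemma abs_Hf_le (k : ℕ) {t : ℝ} (ht : 0 < t) : |Hf k t| ≤ 1 / t ^ 2 := by
  rw [Hf_eq_lap k ht, abs_le]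
  have h1 := abs_le.1 ((Complex.abs_re_le_norm _).trans (norm_lap_le k le_rfl ht))
  have h2 := abs_le.1 ((Complex.abs_re_le_norm _).trans (norm_lap_le k one_le_two ht))
  constructor <;> linarith [h1.1, h1.2, h2.1, h2.2]

/-! ### Integrability of `H_k` and the cosine transform of `H_0` -/

lemma integral_exp_mul_one_sub_cos (a : ℝ) {s : ℝ} (hs : 0 < s) :
    IntegrableOn (fun t : ℝ => s * Real.exp (-(t * s)) * (1 - Real.cos (a * t))) (Ioi 0) ∧
      ∫ t in Ioi (0:ℝ), s * Real.exp (-(t * s)) * (1 - Real.cos (a * t))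
        = a ^ 2 / (s ^ 2 + a ^ 2) := by
  have hre : ∀ b : ℝ, (-(s - b * I) : ℂ).re < 0 := fun b => by simpa using hs
  have hi := fun b : ℝ => (integrableOn_exp_mul_complex_Ioi (hre b) 0).re
  have hv : ∀ b : ℝ, ∫ t in Ioi (0:ℝ), (cexp (-(s - b * I) * t)).re = s / (s ^ 2 + b ^ 2) := by
    intro b
    have h := integral_exp_mul_complex_Ioi (hre b) 0
    have h' := integral_re (integrableOn_exp_mul_complex_Ioi (hre b) 0)
    simp only [RCLike.re_to_complex] at h'
    rw [h', h]
    simp [Complex.div_re, Complex.normSq_apply]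
    ring
  have e : (fun t : ℝ => s * Real.exp (-(t * s)) * (1 - Real.cos (a * t))) = fun t : ℝ =>
      s * ((cexp (-(s - (0:ℝ) * I) * t)).re - (cexp (-(s - a * I) * t)).re) := by
    funext t
    rw [Complex.exp_re, Complex.exp_re]
    simp
    ring_nf
  simp only [RCLike.re_to_complex] at hi
  rw [e]
  refine ⟨((hi 0).sub (hi a)).const_mul s, ?_⟩
  rw [integral_const_mul, integral_sub (hi 0) (hi a), hv, hv]
  have : s ^ 2 + a ^ 2 ≠ 0 := by positivity
  field_simp
  ring

lemma integral_sq_div_sq_add_sq {a : ℝ} (ha : 0 < a) :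
    IntegrableOn (fun s : ℝ => a ^ 2 / (s ^ 2 + a ^ 2)) (Ioi 0) ∧
      ∫ s in Ioi (0:ℝ), a ^ 2 / (s ^ 2 + a ^ 2) = a * (Real.pi / 2) := by
  have e : (fun s : ℝ => a ^ 2 / (s ^ 2 + a ^ 2)) = fun s => (1 + (a⁻¹ * s) ^ 2)⁻¹ := by
    funext s
    have : s ^ 2 + a ^ 2 ≠ 0 := by positivity
    field_simp
    ring
  rw [e]
  refine ⟨(integrable_inv_one_add_sq.comp_mul_left' (inv_ne_zero ha.ne')).integrableOn, ?_⟩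
  rw [integral_comp_mul_left_Ioi (fun s => (1 + s ^ 2)⁻¹) 0 (inv_pos.2 ha)]
  simp

/-- Insert `1 / t² = ∫₀^∞ s e^{-ts} ds` and integrate in `t` first. -/
lemma integral_one_sub_cos_of_pos {a : ℝ} (ha : 0 < a) :
    IntegrableOn (fun t : ℝ => (1 - Real.cos (a * t)) / t ^ 2) (Ioi 0) ∧
      ∫ t in Ioi (0:ℝ), (1 - Real.cos (a * t)) / t ^ 2 = a * (Real.pi / 2) := by
  set f : ℝ → ℝ → ℝ := fun t s => s * Real.exp (-(t * s)) * (1 - Real.cos (a * t)) with hf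
  have hcos : ∀ t, 0 ≤ 1 - Real.cos (a * t) := fun t => sub_nonneg.2 (Real.cos_le_one _)
  have hprod : Integrable (Function.uncurry f)
      ((volume.restrict (Ioi 0)).prod (volume.restrict (Ioi 0))) := by
    have hc : Continuous (Function.uncurry f) := by
      rw [hf]; unfold Function.uncurry; fun_prop
    rw [integrable_prod_iff' hc.aestronglyMeasurable]
    constructor
    · exact (ae_restrict_iff' measurableSet_Ioi).2
        (.of_forall fun s hs => (integral_exp_mul_one_sub_cos a hs).1)
    · refine (integral_sq_div_sq_add_sq ha).1.congr_fun (fun s hs => ?_) measurableSet_Ioi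
      have hs : 0 < s := hs
      simp only [← (integral_exp_mul_one_sub_cos a hs).2]
      refine integral_congr_ae (.of_forall fun t => ?_)
      simp only [Function.uncurry, hf]
      rw [Real.norm_of_nonneg]
      exact mul_nonneg (by positivity) (hcos t)
  have hin : ∀ t ∈ Ioi (0:ℝ), ∫ s in Ioi (0:ℝ), f t s = (1 - Real.cos (a * t)) / t ^ 2 := by
    intro t ht
    simp only [hf]
    rw [integral_mul_const, (integral_mul_exp_neg ht).2]
    ring
  refine ⟨IntegrableOn.congr_fun hprod.integral_prod_left hin measurableSet_Ioi, ?_⟩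
  rw [← setIntegral_congr_fun measurableSet_Ioi hin, integral_integral_swap hprod,
    ← (integral_sq_div_sq_add_sq ha).2]
  exact setIntegral_congr_fun measurableSet_Ioi fun s hs => (integral_exp_mul_one_sub_cos a hs).2

lemma integral_one_sub_cos (a : ℝ) :
    IntegrableOn (fun t : ℝ => (1 - Real.cos (a * t)) / t ^ 2) (Ioi 0) ∧
      ∫ t in Ioi (0:ℝ), (1 - Real.cos (a * t)) / t ^ 2 = |a| * (Real.pi / 2) := by
  rcases lt_trichotomy a 0 with ha | rfl | ha
  · have := integral_one_sub_cos_of_pos (neg_pos.2 ha)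
    simpa [abs_of_neg ha] using this
  · simp
  · simpa [abs_of_pos ha] using integral_one_sub_cos_of_pos ha

lemma Hf_zero_eq (t : ℝ) : Hf 0 t =
    (1 / 2) * ((1 - Real.cos (2 * t)) / t ^ 2 - (1 - Real.cos (1 * t)) / t ^ 2) := by
  rw [Hf, one_mul]; ring

/-- The cosine transform of `H_0` is a multiple of a trapezoid (de la Vallée Poussin) function. -/
lemma integral_Hf_zero_mul_cos (x : ℝ) :
    ∫ t in Ioi (0:ℝ), Hf 0 t * Real.cos (x * t) =
      Real.pi / 8 * (|x + 2| + |x - 2| - |x + 1| - |x - 1|) := by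
  have e : ∀ t, Hf 0 t * Real.cos (x * t) = (1 / 4) *
      (((1 - Real.cos ((x + 2) * t)) / t ^ 2 + (1 - Real.cos ((x - 2) * t)) / t ^ 2) -
        ((1 - Real.cos ((x + 1) * t)) / t ^ 2 + (1 - Real.cos ((x - 1) * t)) / t ^ 2)) := by
    intro t
    rw [Hf, add_mul, sub_mul, add_mul, sub_mul, Real.cos_add, Real.cos_sub, Real.cos_add,
      Real.cos_sub, one_mul]
    ring
  simp only [e]
  have h := fun b => (integral_one_sub_cos b).1
  have h' : ∀ b c : ℝ, IntegrableOn (fun t : ℝ => (1 - Real.cos (b * t)) / t ^ 2 +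
      (1 - Real.cos (c * t)) / t ^ 2) (Ioi 0) := fun b c => (h b).add (h c)
  rw [integral_const_mul, integral_sub (h' _ _) (h' _ _),
    integral_add (h _) (h _), integral_add (h _) (h _)]
  simp only [(integral_one_sub_cos _).2]
  ring

lemma Hf_contOn_zero : ContinuousOn (Hf 0) (Ioi 0) := by
  have : Hf 0 = fun t => ((Real.cos t - Real.cos (2*t)) / 2) / t ^ 2 := by funext t; rw [Hf]
  rw [this]
  exact ContinuousOn.div (by fun_prop) (by fun_prop) fun t ht => pow_ne_zero _ (ne_of_gt ht)

lemma Hf_succ_of_integrable {k : ℕ} (hk : IntegrableOn (Hf k) (Ioi 0)) {t : ℝ} (ht : 0 ≤ t) :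
    Hf (k + 1) t = (∫ x in Ioi (0:ℝ), Hf k x) - ∫ x in (0:ℝ)..t, Hf k x := by
  rw [Hf, ← intervalIntegral.integral_Ioi_sub_Ioi hk ht]
  ring

lemma Hf_succ_contOn {k : ℕ} (hk : IntegrableOn (Hf k) (Ioi 0)) :
    ContinuousOn (Hf (k + 1)) (Ici 0) := by
  have : ContinuousOn (fun t => (∫ x in Ioi (0:ℝ), Hf k x) - ∫ x in (0:ℝ)..t, Hf k x)
      (Ici 0) := by
    have hi : Integrable ((Ioi (0:ℝ)).indicator (Hf k)) :=
      (integrable_indicator_iff measurableSet_Ioi).2 hk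
    have hc : Continuous fun t => ∫ x in (0:ℝ)..t, (Ioi (0:ℝ)).indicator (Hf k) x :=
      hi.continuous_primitive 0
    refine continuousOn_const.sub (hc.continuousOn.congr fun t ht => ?_)
    have ht : 0 ≤ t := ht
    simp only
    rw [intervalIntegral.integral_of_le ht, intervalIntegral.integral_of_le ht]
    exact setIntegral_congr_fun measurableSet_Ioc fun x hx => by
      rw [indicator_of_mem (show x ∈ Ioi (0:ℝ) from hx.1)]
  exact this.congr fun t ht => Hf_succ_of_integrable hk ht

lemma Hf_integrable (k : ℕ) : IntegrableOn (Hf k) (Ioi 0) := by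
  induction k with
  | zero =>
    refine IntegrableOn.congr_fun ?_ (fun t _ => (Hf_zero_eq t).symm) measurableSet_Ioi
    exact ((integral_one_sub_cos 2).1.sub (integral_one_sub_cos 1).1).const_mul _
  | succ k ih =>
    have hc := Hf_succ_contOn ih
    rw [← Ioc_union_Ioi_eq_Ioi zero_le_one]
    refine IntegrableOn.union ?_ ?_
    · exact ((hc.mono Icc_subset_Ici_self).integrableOn_Icc).mono_set Ioc_subset_Icc_self
    · refine Integrable.mono' (integrableOn_inv_sq one_pos) ?_ ?_
      · exact (hc.mono (Ioi_subset_Ici zero_le_one)).aestronglyMeasurable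
          measurableSet_Ioi
      · exact (ae_restrict_iff' measurableSet_Ioi).2 (.of_forall fun t ht =>
          abs_Hf_le (k + 1) (one_pos.trans ht))

lemma Hf_contOn (k : ℕ) : ContinuousOn (Hf k) (Ioi 0) := by
  cases k with
  | zero => exact Hf_contOn_zero
  | succ k => exact (Hf_succ_contOn (Hf_integrable k)).mono Ioi_subset_Ici_self

lemma Hf_succ_hasDerivAt (k : ℕ) {t : ℝ} (ht : 0 < t) :
    HasDerivAt (Hf (k + 1)) (-Hf k t) t := by
  have hk := Hf_integrable k
  have h1 : HasDerivAt (fun t => (∫ x in Ioi (0:ℝ), Hf k x) - ∫ x in (0:ℝ)..t, Hf k x)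
      (-Hf k t) t := by
    refine (intervalIntegral.integral_hasDerivAt_right ?_ ?_ ?_).const_sub _
    · rw [intervalIntegrable_iff_integrableOn_Ioc_of_le ht.le]
      exact hk.mono_set Ioc_subset_Ioi_self
    · exact (Hf_contOn k).stronglyMeasurableAtFilter isOpen_Ioi t ht
    · exact (Hf_contOn k).continuousAt (Ioi_mem_nhds ht)
  refine h1.congr_of_eventuallyEq ?_
  filter_upwards [Ioi_mem_nhds ht] with u hu
  exact Hf_succ_of_integrable hk (le_of_lt hu)

/-- Since the integral of `H_0` itself is `π / 4`. -/
lemma one_le_Cc_zero : 1 ≤ Cc 0 := by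
  have h : ∫ t in Ioi (0:ℝ), Hf 0 t = Real.pi / 4 := by
    have := integral_Hf_zero_mul_cos 0
    simp at this
    rw [this]; norm_num; ring
  have h2 : ∫ t in Ioi (0:ℝ), Hf 0 t ≤ ∫ t in Ioi (0:ℝ), |Hf 0 t| :=
    integral_mono (Hf_integrable 0) (Hf_integrable 0).abs fun t => le_abs_self _
  rw [h] at h2
  rw [Cc]
  calc (1:ℝ) = 4 / Real.pi * (Real.pi / 4) := by field_simp
    _ ≤ _ := by gcongr

/-! ### Integration by parts for the transforms of `H_k` -/

/-- The oscillation `e^{ixt} + (-1)^k e^{-ixt}`: it is `2 cos (xt)` for even `k` and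
`2i sin (xt)` for odd `k`. -/
def osc (k : ℕ) (x t : ℝ) : ℂ := cexp (x * t * I) + (-1) ^ k * cexp (-(x * t * I))

/-- The transform of the extension of `H_k` to the real line which has the parity of `k`. -/
def FH (k : ℕ) (x : ℝ) : ℂ := ∫ t in Ioi (0:ℝ), (Hf k t : ℂ) * osc k x t

lemma norm_osc_le (k : ℕ) (x t : ℝ) : ‖osc k x t‖ ≤ 2 := by
  unfold osc
  refine (norm_add_le _ _).trans ?_
  rw [norm_mul, norm_pow, norm_neg, norm_one, one_pow, one_mul, Complex.norm_exp,
    Complex.norm_exp]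
  simp
  norm_num

lemma osc_cont (k : ℕ) : Continuous fun q : ℝ × ℝ => osc k q.1 q.2 := by
  unfold osc; fun_prop

lemma Hf_mul_osc_norm_le (k : ℕ) (x t : ℝ) : ‖(Hf k t : ℂ) * osc k x t‖ ≤ |Hf k t| * 2 := by
  rw [norm_mul, Complex.norm_real, Real.norm_eq_abs]
  exact mul_le_mul_of_nonneg_left (norm_osc_le k x t) (abs_nonneg _)

lemma Hf_mul_osc_aesm (k j : ℕ) (x : ℝ) : AEStronglyMeasurable
    (fun t => (Hf k t : ℂ) * osc j x t) (volume.restrict (Ioi 0)) :=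
  (Complex.continuous_ofReal.comp_aestronglyMeasurable (Hf_integrable k).1).mul
    ((osc_cont j).comp (Continuous.prodMk_right x)).aestronglyMeasurable

lemma Hf_mul_osc_integrable (k : ℕ) (x : ℝ) :
    IntegrableOn (fun t => (Hf k t : ℂ) * osc k x t) (Ioi 0) :=
  Integrable.mono' ((Hf_integrable k).abs.mul_const 2) (Hf_mul_osc_aesm k k x)
    (.of_forall fun t => Hf_mul_osc_norm_le k x t)

lemma osc_hasDerivAt (k : ℕ) (x t : ℝ) :
    HasDerivAt (osc k x) (x * I * osc (k + 1) x t) t := by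
  have h0 : HasDerivAt (fun t : ℝ => (x * t * I : ℂ)) (x * I) t := by
    have := ((hasDerivAt_id t).ofReal_comp.const_mul (x : ℂ)).mul_const I
    simpa using this
  have h := h0.cexp.add (h0.neg.cexp.const_mul ((-1 : ℂ) ^ k))
  refine h.congr_deriv ?_
  unfold osc
  simp only [Pi.neg_apply]
  rw [pow_succ]; ring

lemma osc_at_zero (k : ℕ) (x : ℝ) : osc k x 0 = 1 + (-1) ^ k := by simp [osc]

lemma osc_zero_left (k : ℕ) (t : ℝ) : osc k 0 t = 1 + (-1) ^ k := by simp [osc]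

/-- Integration by parts. -/
lemma FH_succ (k : ℕ) (x : ℝ) : x * I * FH (k + 1) x = FH k x - FH k 0 := by
  have h0 : FH k 0 = Hf (k + 1) 0 * (1 + (-1) ^ k) := by
    unfold FH
    simp only [osc_zero_left]
    rw [integral_mul_const, integral_complex_ofReal, Hf]
  have hi1 := (Hf_mul_osc_integrable (k + 1) x).const_mul (x * I)
  have hi0 := Hf_mul_osc_integrable k x
  have key := integral_Ioi_of_hasDerivAt_of_tendsto (a := (0:ℝ)) (m := (0:ℂ))
    (f := fun t => (Hf (k + 1) t : ℂ) * osc k x t)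
    (f' := fun t => x * I * ((Hf (k + 1) t : ℂ) * osc (k + 1) x t) - (Hf k t : ℂ) * osc k x t)
    ?_ ?_ (hi1.sub hi0) ?_
  · rw [integral_sub hi1 hi0, integral_const_mul] at key
    simp only [osc_at_zero, ← h0] at key
    unfold FH at key ⊢
    linear_combination key
  · refine ContinuousWithinAt.mul ?_ (osc_hasDerivAt k x 0).continuousAt.continuousWithinAt
    exact Complex.continuous_ofReal.continuousAt.comp_continuousWithinAt
      (Hf_succ_contOn (Hf_integrable k) 0 self_mem_Ici)
  · intro t ht
    refine ((Hf_succ_hasDerivAt k ht).ofReal_comp.mul (osc_hasDerivAt k x t)).congr_deriv ?_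
    push_cast; ring
  · have hz : Filter.Tendsto (fun t : ℝ => 1 / t ^ 2 * 2) Filter.atTop (nhds 0) := by
      have : Filter.Tendsto (fun t : ℝ => 1 / t ^ 2) Filter.atTop (nhds 0) := by
        refine (Filter.tendsto_pow_atTop (α := ℝ) two_ne_zero).inv_tendsto_atTop.congr fun t => ?_
        simp
      simpa using this.mul_const 2
    refine squeeze_zero_norm' ?_ hz
    filter_upwards [Filter.eventually_gt_atTop 0] with t ht
    rw [norm_mul, Complex.norm_real, Real.norm_eq_abs]
    exact mul_le_mul (abs_Hf_le _ ht) (norm_osc_le k x t) (norm_nonneg _) (by positivity)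

lemma FH_cont (k : ℕ) : Continuous (FH k) := by
  unfold FH
  refine continuous_of_dominated (bound := fun t => |Hf k t| * 2)
    (fun x => Hf_mul_osc_aesm k k x) (fun x => .of_forall fun t => Hf_mul_osc_norm_le k x t)
    ((Hf_integrable k).abs.mul_const 2) (.of_forall fun t => ?_)
  exact continuous_const.mul ((osc_cont k).comp (Continuous.prodMk_left t))

lemma FH_zero (x : ℝ) : FH 0 x =
    ((Real.pi / 4 * (|x + 2| + |x - 2| - |x + 1| - |x - 1|) : ℝ) : ℂ) := by
  have e : ∀ t : ℝ, (Hf 0 t : ℂ) * osc 0 x t = ((2 * (Hf 0 t * Real.cos (x * t)) : ℝ) : ℂ) := by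
    intro t
    unfold osc
    push_cast
    rw [Complex.cos]
    ring_nf
  unfold FH
  simp only [e]
  rw [integral_complex_ofReal, integral_const_mul, integral_Hf_zero_mul_cos]
  congr 1
  ring

lemma FH_zero_of_lt {x : ℝ} (h0 : 0 ≤ x) (h1 : x < 1) : FH 0 x = ((Real.pi / 2 : ℝ) : ℂ) := by
  rw [FH_zero, abs_of_nonneg (by linarith : 0 ≤ x + 2), abs_of_neg (by linarith : x - 2 < 0),
    abs_of_nonneg (by linarith : 0 ≤ x + 1), abs_of_neg (by linarith : x - 1 < 0)]
  congr 1; ring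

lemma FH_zero_of_two_le {x : ℝ} (h : 2 ≤ x) : FH 0 x = 0 := by
  rw [FH_zero, abs_of_nonneg (by linarith : 0 ≤ x + 2), abs_of_nonneg (by linarith : 0 ≤ x - 2),
    abs_of_nonneg (by linarith : 0 ≤ x + 1), abs_of_nonneg (by linarith : 0 ≤ x - 1)]
  norm_num

/-- `(ix)^k F_k(x) = F_0(x) - F_0(0)` for `k ≥ 1`, where `F_k` is `FH k`. The terms `F_k(0)`
produced by integration by parts vanish for `k ≥ 1` because `F_0` is constant near `0`. -/
lemma FH_formula (k : ℕ) (x : ℝ) :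
    (x * I) ^ (k + 1) * FH (k + 1) x = FH 0 x - ((Real.pi / 2 : ℝ) : ℂ) := by
  induction k generalizing x with
  | zero => rw [← FH_zero_of_lt le_rfl one_pos, zero_add, pow_one, FH_succ]
  | succ k ih =>
    have h0 : FH (k + 1) 0 = 0 := by
      have h1 : Filter.Tendsto (FH (k + 1)) (nhdsWithin 0 (Ioi 0)) (nhds (FH (k + 1) 0)) :=
        (FH_cont (k + 1)).continuousAt.continuousWithinAt
      refine tendsto_nhds_unique h1 (tendsto_const_nhds.congr' ?_)
      filter_upwards [Ioo_mem_nhdsGT (zero_lt_one' ℝ)] with y hy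
      have := ih y
      rw [FH_zero_of_lt hy.1.le hy.2, sub_self] at this
      rcases mul_eq_zero.1 this with h | h
      · have hy0 : (y : ℂ) * I ≠ 0 := by simpa using hy.1.ne'
        exact absurd h (pow_ne_zero _ hy0)
      · exact h.symm
    rw [pow_succ, mul_assoc, FH_succ, h0, sub_zero, ih]

/-! ### The weighted `L^p` norm -/

/-- The measure `dA_α` on the unit disc. -/
def bMeas (α : ℝ) : Measure ℂ :=
  (volume.restrict unitDisc).withDensity fun z => ENNReal.ofReal (wt α z)

/-- The norm of the weighted Lebesgue space `L^p(dA_α)`, with values in `[0, ∞]`. -/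
def eN (p α : ℝ) (f : ℂ → ℂ) : ENNReal := eLpNorm f (ENNReal.ofReal p) (bMeas α)

instance (α : ℝ) : SFinite (bMeas α) := by unfold bMeas; infer_instance

lemma measurableSet_unitDisc : MeasurableSet unitDisc := Metric.isOpen_ball.measurableSet

lemma wt_measurable (α : ℝ) : Measurable (wt α) := by unfold wt; fun_prop

lemma wt_nonneg {α : ℝ} (hα : -1 < α) {z : ℂ} (hz : z ∈ unitDisc) : 0 ≤ wt α z := by
  have hz : ‖z‖ < 1 := by simpa [unitDisc] using hz
  have h1 : 0 ≤ 1 - ‖z‖ ^ 2 := by nlinarith [norm_nonneg z]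
  have h2 : 0 ≤ α + 1 := by linarith
  unfold wt; positivity

lemma eN_eq {p α : ℝ} (hp : 1 < p) (f : ℂ → ℂ) :
    eN p α f = (∫⁻ z in unitDisc, ENNReal.ofReal (‖f z‖ ^ p * wt α z)) ^ (1 / p) := by
  have hp0 : 0 < p := by linarith
  unfold eN
  rw [eLpNorm_eq_lintegral_rpow_enorm_toReal (by simpa using hp0) (by simp),
    ENNReal.toReal_ofReal hp0.le]
  congr 1
  unfold bMeas
  rw [lintegral_withDensity_eq_lintegral_mul_non_measurable _
    (wt_measurable α).ennreal_ofReal (.of_forall fun _ => ENNReal.ofReal_lt_top)]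
  refine lintegral_congr fun z => ?_
  rw [Pi.mul_apply, mul_comm, ENNReal.ofReal_mul (by positivity), ← ofReal_norm,
    ENNReal.ofReal_rpow_of_nonneg (norm_nonneg _) hp0.le]

lemma bNorm_eq {p α : ℝ} (hp : 1 < p) (hα : -1 < α) {f : ℂ → ℂ} (hf : ContinuousOn f unitDisc) :
    bNorm p α f = (eN p α f).toReal := by
  rw [eN_eq hp, ← ENNReal.toReal_rpow, bNorm, integral_eq_lintegral_of_nonneg_ae]
  · exact (ae_restrict_iff' measurableSet_unitDisc).2 (.of_forall fun z hz =>
      mul_nonneg (by positivity) (wt_nonneg hα hz))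
  · have h1 : AEMeasurable f (volume.restrict unitDisc) :=
      hf.aemeasurable measurableSet_unitDisc
    exact ((h1.norm.pow_const p).mul (wt_measurable α).aemeasurable).aestronglyMeasurable

lemma eN_lt_top {p α : ℝ} (hp : 1 < p) {f : ℂ → ℂ} (hf : MemAp p α f) : eN p α f < ⊤ := by
  rw [eN_eq hp]
  refine ENNReal.rpow_lt_top_of_nonneg (by positivity) (ne_of_lt ?_)
  refine lt_of_le_of_lt (lintegral_mono fun z => ?_) hf.2.2
  rw [← ofReal_norm]
  exact ENNReal.ofReal_le_ofReal (le_abs_self _)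

lemma eN_congr {p α : ℝ} {f g : ℂ → ℂ} (h : ∀ z ∈ unitDisc, f z = g z) :
    eN p α f = eN p α g := by
  unfold eN bMeas
  refine eLpNorm_congr_ae ((withDensity_absolutelyContinuous _ _).ae_le ?_)
  exact (ae_restrict_iff' measurableSet_unitDisc).2 (.of_forall h)

lemma aesm_bMeas {α : ℝ} {f : ℂ → ℂ} (hf : ContinuousOn f unitDisc) :
    AEStronglyMeasurable f (bMeas α) :=
  (hf.aestronglyMeasurable measurableSet_unitDisc).mono_ac (withDensity_absolutelyContinuous _ _)

lemma mul_mem_unitDisc {w z : ℂ} (hw : ‖w‖ = 1) : w * z ∈ unitDisc ↔ z ∈ unitDisc := by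
  simp [unitDisc, hw]

/-- `dA_α` is rotation invariant. -/
lemma measurePreserving_rot (α : ℝ) {w : ℂ} (hw : ‖w‖ = 1) :
    MeasurePreserving (fun z => w * z) (bMeas α) (bMeas α) := by
  have hm : Measurable fun z : ℂ => w * z := by fun_prop
  have hv : MeasurePreserving (fun z : ℂ => w * z) volume volume := by
    have : MeasurePreserving (rotation (⟨w, by simp [Submonoid.unitSphere, hw]⟩ : Circle) : ℂ → ℂ)
        (volume : Measure ℂ) volume := LinearIsometryEquiv.measurePreserving _
    exact this
  refine ⟨hm, Measure.ext fun s hs => ?_⟩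
  rw [Measure.map_apply hm hs]
  unfold bMeas
  rw [withDensity_apply _ hs, withDensity_apply _ (hm hs), ← lintegral_indicator (hm hs),
    ← lintegral_indicator hs, ← lintegral_indicator measurableSet_unitDisc,
    ← lintegral_indicator measurableSet_unitDisc]
  rw [← hv.lintegral_comp
    (((wt_measurable α).ennreal_ofReal.indicator hs).indicator measurableSet_unitDisc)]
  refine lintegral_congr fun z => ?_
  have hwt : wt α (w * z) = wt α z := by simp [wt, hw]
  simp only [indicator, mem_preimage]
  rw [hwt]
  congr 1
  exact propext (mul_mem_unitDisc hw).symm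

lemma eN_rot {p α : ℝ} {G : ℂ → ℂ} (hG : Measurable G) {w : ℂ} (hw : ‖w‖ = 1) :
    eN p α (fun z => G (w * z)) = eN p α G :=
  eLpNorm_comp_measurePreserving hG.aestronglyMeasurable (measurePreserving_rot α hw)

/-- Minkowski's integral inequality for a family bounded uniformly in the norm; in this case it
follows from Hölder's inequality in `t` and Tonelli's theorem. -/
lemma lintegral_lintegral_rpow_le {p α : ℝ} (hp : 1 < p) {ν : Measure ℝ} [IsFiniteMeasure ν]
    {u : ℝ → ℂ → ℂ} (hu : Measurable (Function.uncurry u)) {M : ENNReal}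
    (hM : ∀ᵐ t ∂ν, eN p α (u t) ≤ M) :
    (∫⁻ z, (∫⁻ t, ‖u t z‖ₑ ∂ν) ^ p ∂(bMeas α)) ^ (1 / p) ≤ ν univ * M := by
  have hp0 : 0 < p := by linarith
  have h1 : ∀ z, (∫⁻ t, ‖u t z‖ₑ ∂ν) ^ p ≤ (∫⁻ t, ‖u t z‖ₑ ^ p ∂ν) * ν univ ^ (p - 1) := by
    intro z
    have h := eLpNorm'_le_eLpNorm'_mul_rpow_measure_univ (μ := ν) (f := fun t => u t z)
      one_pos hp.le (by
        exact (hu.comp (measurable_id.prodMk measurable_const)).aestronglyMeasurable)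
    simp only [eLpNorm', ENNReal.rpow_one, div_one] at h
    calc _ ≤ ((∫⁻ t, ‖u t z‖ₑ ^ p ∂ν) ^ (1 / p) * ν univ ^ (1 - 1 / p)) ^ p :=
          ENNReal.rpow_le_rpow h hp0.le
      _ = _ := by
          rw [ENNReal.mul_rpow_of_nonneg _ _ hp0.le, ← ENNReal.rpow_mul, ← ENNReal.rpow_mul,
            one_div_mul_cancel hp0.ne', ENNReal.rpow_one]
          congr 2
          field_simp
  have hM' : ∀ᵐ t ∂ν, ∫⁻ z, ‖u t z‖ₑ ^ p ∂(bMeas α) ≤ M ^ p := by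
    filter_upwards [hM] with t ht
    unfold eN at ht
    rw [eLpNorm_eq_lintegral_rpow_enorm_toReal (by simpa using hp0) (by simp),
      ENNReal.toReal_ofReal hp0.le] at ht
    have := ENNReal.rpow_le_rpow ht hp0.le
    rwa [← ENNReal.rpow_mul, one_div_mul_cancel hp0.ne', ENNReal.rpow_one] at this
  have h2 : ∫⁻ z, (∫⁻ t, ‖u t z‖ₑ ∂ν) ^ p ∂(bMeas α) ≤ (ν univ * M) ^ p := by
    calc _ ≤ ∫⁻ z, (∫⁻ t, ‖u t z‖ₑ ^ p ∂ν) * ν univ ^ (p - 1) ∂(bMeas α) := lintegral_mono h1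
      _ = (∫⁻ z, ∫⁻ t, ‖u t z‖ₑ ^ p ∂ν ∂(bMeas α)) * ν univ ^ (p - 1) :=
          lintegral_mul_const' _ _
            (ENNReal.rpow_lt_top_of_nonneg (by linarith) (measure_ne_top _ _)).ne
      _ = (∫⁻ t, ∫⁻ z, ‖u t z‖ₑ ^ p ∂(bMeas α) ∂ν) * ν univ ^ (p - 1) := by
          rw [lintegral_lintegral_swap]
          exact ((hu.comp measurable_swap).enorm.pow_const p).aemeasurable
      _ ≤ (∫⁻ _, M ^ p ∂ν) * ν univ ^ (p - 1) := by gcongr ?_ * _; exact lintegral_mono_ae hM'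
      _ = (ν univ * M) ^ p := by
          rw [lintegral_const, ENNReal.mul_rpow_of_nonneg _ _ hp0.le, mul_assoc,
            mul_comm (M ^ p)]
          congr 1
          nth_rewrite 1 [← ENNReal.rpow_one (ν univ)]
          rw [← ENNReal.rpow_add_of_nonneg _ _ zero_le_one (by linarith)]
          congr 1; ring
  calc _ ≤ ((ν univ * M) ^ p) ^ (1 / p) := ENNReal.rpow_le_rpow h2 (by positivity)
    _ = _ := by rw [← ENNReal.rpow_mul, mul_one_div_cancel hp0.ne', ENNReal.rpow_one]

lemma eN_integral_le {p α : ℝ} (hp : 1 < p) {S : Set ℝ} (hS : MeasurableSet S) {k : ℝ → ℝ}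
    (hk : IntegrableOn k S) {u : ℝ → ℂ → ℂ} (hu : Measurable (Function.uncurry u)) {M : ENNReal}
    (hM : ∀ t ∈ S, eN p α (u t) ≤ M) :
    eN p α (fun z => ∫ t in S, (k t : ℂ) * u t z) ≤ ENNReal.ofReal (∫ t in S, |k t|) * M := by
  have hp0 : 0 < p := by linarith
  have hkm : AEMeasurable (fun t => ‖k t‖ₑ) (volume.restrict S) := hk.1.enorm
  set ν : Measure ℝ := (volume.restrict S).withDensity fun t => ‖k t‖ₑ with hν
  have hνu : ν univ = ENNReal.ofReal (∫ t in S, |k t|) := by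
    rw [hν, withDensity_apply _ MeasurableSet.univ, Measure.restrict_univ]
    have := ofReal_integral_norm_eq_lintegral_enorm hk
    simp only [Real.norm_eq_abs] at this
    exact this.symm
  have : IsFiniteMeasure ν := ⟨by rw [hνu]; exact ENNReal.ofReal_lt_top⟩
  rw [← hνu]
  refine le_trans ?_ (lintegral_lintegral_rpow_le hp hu (α := α) (ν := ν) (M := M) ?_)
  · unfold eN
    rw [eLpNorm_eq_lintegral_rpow_enorm_toReal (by simpa using hp0) (by simp),
      ENNReal.toReal_ofReal hp0.le]
    refine ENNReal.rpow_le_rpow (lintegral_mono fun z => ENNReal.rpow_le_rpow ?_ hp0.le)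
      (by positivity)
    refine (enorm_integral_le_lintegral_enorm _).trans (le_of_eq ?_)
    have hum : Measurable fun t => u t z := hu.comp (measurable_id.prodMk measurable_const)
    rw [hν, lintegral_withDensity_eq_lintegral_mul₀ hkm hum.enorm.aemeasurable]
    refine lintegral_congr fun t => ?_
    rw [enorm_mul, Pi.mul_apply]
    congr 1
    rw [← ofReal_norm, ← ofReal_norm, Complex.norm_real]
  · exact (withDensity_absolutelyContinuous _ _).ae_le
      ((ae_restrict_iff' hS).2 (.of_forall hM))

/-! ### Power series in the disc -/

/-- `g` is the sum of the power series with coefficients `a` in the unit disc. -/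
def HasPS (a : ℕ → ℂ) (g : ℂ → ℂ) : Prop := ∀ z ∈ unitDisc, HasSum (fun j => a j * z ^ j) (g z)

lemma exists_hasPS {g : ℂ → ℂ} (hg : DifferentiableOn ℂ g unitDisc) : ∃ a, HasPS a g := by
  refine ⟨fun j => (j.factorial : ℂ)⁻¹ * iteratedDeriv j g 0, fun z hz => ?_⟩
  refine (Complex.hasSum_taylorSeries_on_ball hg hz).congr_fun fun j => ?_
  simp; ring

namespace HasPS

variable {a b : ℕ → ℂ} {g g' : ℂ → ℂ}

lemma congr_fun (h : HasPS a g) (hg : ∀ z ∈ unitDisc, g' z = g z) : HasPS a g' := fun z hz => by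
  rw [hg z hz]; exact h z hz

lemma congr_coeff (h : HasPS a g) (hb : ∀ j, b j = a j) : HasPS b g := by
  rwa [show b = a from funext hb]

lemma eq (h : HasPS a g) (h' : HasPS a g') : ∀ z ∈ unitDisc, g z = g' z :=
  fun z hz => (h z hz).unique (h' z hz)

lemma sub (h : HasPS a g) (h' : HasPS b g') : HasPS (fun j => a j - b j) fun z => g z - g' z :=
  fun z hz => ((h z hz).sub (h' z hz)).congr_fun fun j => by ring

lemma add (h : HasPS a g) (h' : HasPS b g') : HasPS (fun j => a j + b j) fun z => g z + g' z :=
  fun z hz => ((h z hz).add (h' z hz)).congr_fun fun j => by ring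

lemma const_mul (c : ℂ) (h : HasPS a g) : HasPS (fun j => c * a j) fun z => c * g z :=
  fun z hz => ((h z hz).mul_left c).congr_fun fun j => by ring

lemma summable_norm (h : HasPS a g) {r : ℝ} (h0 : 0 ≤ r) (h1 : r < 1) :
    Summable fun j => ‖a j‖ * r ^ j := by
  have hr : (r : ℂ) ∈ unitDisc := by simpa [unitDisc, abs_of_nonneg h0] using h1
  refine (h _ hr).summable.norm.congr fun j => ?_
  rw [norm_mul, norm_pow, Complex.norm_real, Real.norm_of_nonneg h0]

lemma rot (h : HasPS a g) (c : ℝ) :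
    HasPS (fun j => a j * cexp (j * c * I)) fun z => g (cexp (c * I) * z) := fun z hz => by
  refine (h _ ((mul_mem_unitDisc (Complex.norm_exp_ofReal_mul_I c)).2 hz)).congr_fun fun j => ?_
  rw [mul_pow, ← Complex.exp_nat_mul, mul_assoc, mul_assoc]

lemma local_data (h : HasPS a g) {z : ℂ} (hz : z ∈ unitDisc) : ∃ r : ℝ, z ∈ ball (0:ℂ) r ∧
    ball (0:ℂ) r ⊆ unitDisc ∧ Summable (fun j => ‖a j‖ * r ^ j) ∧
    ∀ (j : ℕ), ∀ w ∈ ball (0:ℂ) r, ‖a j * w ^ j‖ ≤ ‖a j‖ * r ^ j := by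
  have hz' : ‖z‖ < 1 := by simpa [unitDisc] using hz
  obtain ⟨r, hzr, hr⟩ := exists_between hz'
  refine ⟨r, by simpa using hzr, ball_subset_ball hr.le,
    h.summable_norm ((norm_nonneg z).trans hzr.le) hr, fun j w hw => ?_⟩
  have hw : ‖w‖ < r := by simpa using hw
  rw [norm_mul, norm_pow]
  gcongr

lemma eventually_eq (h : HasPS a g) {z : ℂ} (hz : z ∈ unitDisc) :
    g =ᶠ[nhds z] fun w => ∑' j, a j * w ^ j := by
  filter_upwards [Metric.isOpen_ball.mem_nhds hz] with w hw
  exact (h w hw).tsum_eq.symm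

lemma differentiableOn (h : HasPS a g) : DifferentiableOn ℂ g unitDisc := by
  intro z hz
  obtain ⟨r, hzr, -, hs, hb⟩ := h.local_data hz
  have := Complex.differentiableOn_tsum_of_summable_norm hs
    (fun j => (by fun_prop : DifferentiableOn ℂ (fun w : ℂ => a j * w ^ j) (ball (0:ℂ) r)))
    Metric.isOpen_ball hb
  exact ((this.differentiableAt (Metric.isOpen_ball.mem_nhds hzr)).congr_of_eventuallyEq
    (h.eventually_eq hz)).differentiableWithinAt

lemma dth (h : HasPS a g) : HasPS (fun j => I * j * a j) (Dth g) := by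
  intro z hz
  obtain ⟨r, hzr, -, hs, hb⟩ := h.local_data hz
  have := Complex.hasSum_deriv_of_summable_norm hs
    (fun j => (by fun_prop : DifferentiableOn ℂ (fun w : ℂ => a j * w ^ j) (ball (0:ℂ) r)))
    Metric.isOpen_ball hb hzr
  rw [← (h.eventually_eq hz).deriv_eq] at this
  unfold Dth
  refine (this.mul_left (I * z)).congr_fun fun j => ?_
  simp only [deriv_const_mul_field, deriv_pow_field]
  cases j with
  | zero => simp
  | succ j => rw [Nat.add_sub_cancel, pow_succ]; ring

lemma dth_iterate (h : HasPS a g) (K : ℕ) : HasPS (fun j => (I * j) ^ K * a j) (Dth^[K] g) := by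
  induction K with
  | zero => simpa using h
  | succ K ih =>
    rw [Function.iterate_succ_apply']
    exact ih.dth.congr_coeff fun j => by rw [pow_succ]; ring

/-- Superpositions `∫ k(t) u_t dt` of functions `u_t` obtained from `g` by bounded multipliers. -/
lemma integral (h : HasPS a g) {S : Set ℝ} {k : ℝ → ℝ} (hk : IntegrableOn k S)
    {e : ℕ → ℝ → ℂ} (he : ∀ j, Continuous (e j)) {C : ℝ} (hC : ∀ j t, ‖e j t‖ ≤ C)
    {u : ℝ → ℂ → ℂ} (hu : ∀ t, HasPS (fun j => a j * e j t) (u t)) :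
    HasPS (fun j => a j * ∫ t in S, (k t : ℂ) * e j t) fun z => ∫ t in S, (k t : ℂ) * u t z := by
  intro z hz
  have hz' : ‖z‖ < 1 := by simpa [unitDisc] using hz
  set F : ℕ → ℝ → ℂ := fun j t => (k t : ℂ) * (a j * e j t * z ^ j) with hF
  have hbd : ∀ j t, ‖F j t‖ ≤ |k t| * (‖a j‖ * C * ‖z‖ ^ j) := by
    intro j t
    simp only [hF, norm_mul, norm_pow, Complex.norm_real, Real.norm_eq_abs]
    gcongr
    exact hC j t
  have hFi : ∀ j, Integrable (F j) (volume.restrict S) := by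
    intro j
    refine Integrable.mono' (hk.abs.mul_const (‖a j‖ * C * ‖z‖ ^ j)) ?_ (.of_forall (hbd j))
    exact (Complex.continuous_ofReal.comp_aestronglyMeasurable hk.1).mul
      ((continuous_const.mul (he j)).mul continuous_const).aestronglyMeasurable
  have hs : Summable fun j => ∫ t in S, ‖F j t‖ := by
    refine Summable.of_nonneg_of_le (fun j => integral_nonneg fun t => norm_nonneg _)
      (fun j => integral_mono (hFi j).norm (hk.abs.mul_const _) (hbd j)) ?_
    simp only [integral_mul_const]
    refine Summable.mul_left _ ?_
    refine ((h.summable_norm (norm_nonneg z) hz').mul_left C).congr fun j => ?_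
    ring
  have key := hasSum_integral_of_summable_integral_norm hFi hs
  have e1 : ∀ t, ∑' j, F j t = (k t : ℂ) * u t z := fun t => ((hu t z hz).mul_left _).tsum_eq
  simp only [e1] at key
  refine key.congr_fun fun j => ?_
  simp only [hF]
  rw [← integral_const_mul, ← integral_mul_const]
  congr 1
  funext t
  ring

lemma measurable_indicator (h : HasPS a g) : Measurable (unitDisc.indicator g) := by
  classical
  rw [← piecewise_eq_indicator]
  exact ContinuousOn.measurable_piecewise h.differentiableOn.continuousOn
    continuous_const.continuousOn measurableSet_unitDisc

end HasPS

/-! ### A Favard-type estimate -/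

lemma eN_const_mul {p α : ℝ} (c : ℂ) (f : ℂ → ℂ) :
    eN p α (fun z => c * f z) = ENNReal.ofReal ‖c‖ * eN p α f := by
  have := eLpNorm_const_smul c f (ENNReal.ofReal p) (bMeas α)
  rw [← ofReal_norm] at this
  exact this

lemma eN_add_le {p α : ℝ} (hp : 1 < p) {f g : ℂ → ℂ} (hf : ContinuousOn f unitDisc)
    (hg : ContinuousOn g unitDisc) : eN p α (fun z => f z + g z) ≤ eN p α f + eN p α g :=
  eLpNorm_add_le (aesm_bMeas hf) (aesm_bMeas hg) (by simpa using hp.le)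

lemma eN_rot' {p α : ℝ} {b : ℕ → ℂ} {G : ℂ → ℂ} (hG : HasPS b G) (c : ℝ) :
    eN p α (fun z => G (cexp (c * I) * z)) = eN p α G := by
  have hw := Complex.norm_exp_ofReal_mul_I c
  rw [← eN_congr (fun z hz => indicator_of_mem hz G), ← eN_rot hG.measurable_indicator hw]
  exact eN_congr fun z hz => (indicator_of_mem ((mul_mem_unitDisc hw).2 hz) G).symm

/-- The convolution of `G` along circles with the dilate by `c` of the extension of `H_k` to the real
line that has the parity of `k`. It multiplies the `j`-th Taylor coefficient by `FH k (c * j)`. -/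
def hfConv (k : ℕ) (c : ℝ) (G : ℂ → ℂ) (z : ℂ) : ℂ :=
  ∫ t in Ioi (0:ℝ), (Hf k t : ℂ) *
    (G (cexp ((c * t : ℝ) * I) * z) + (-1) ^ k * G (cexp ((-(c * t) : ℝ) * I) * z))

lemma hfConv_hasPS (k : ℕ) (c : ℝ) {b : ℕ → ℂ} {G : ℂ → ℂ} (hG : HasPS b G) :
    HasPS (fun j => b j * FH k (c * j)) (hfConv k c G) := by
  refine hG.integral (e := fun j t => osc k (c * j) t) (C := 2) (Hf_integrable k)
    (fun j => ?_) (fun j t => norm_osc_le _ _ _) (fun t => ?_)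
  · exact (osc_cont k).comp (Continuous.prodMk_right _)
  · refine ((hG.rot (c * t)).add ((hG.rot (-(c * t))).const_mul ((-1) ^ k))).congr_coeff fun j => ?_
    unfold osc
    push_cast
    ring_nf

lemma eN_hfConv_le {p α : ℝ} (hp : 1 < p) (k : ℕ) (c : ℝ) {b : ℕ → ℂ} {G : ℂ → ℂ}
    (hG : HasPS b G) :
    eN p α (hfConv k c G) ≤ ENNReal.ofReal (∫ t in Ioi (0:ℝ), |Hf k t|) * (2 * eN p α G) := by
  have hmem : ∀ s : ℝ, ∀ z ∈ unitDisc, cexp (s * I) * z ∈ unitDisc := fun s z hz =>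
    (mul_mem_unitDisc (Complex.norm_exp_ofReal_mul_I s)).2 hz
  set u : ℝ → ℂ → ℂ := fun t z => unitDisc.indicator G (cexp ((c * t : ℝ) * I) * z) +
    (-1) ^ k * unitDisc.indicator G (cexp ((-(c * t) : ℝ) * I) * z) with hu
  have hum : Measurable (Function.uncurry u) := by
    have hm := hG.measurable_indicator
    refine Measurable.add (hm.comp ?_) (measurable_const.mul (hm.comp ?_))
    all_goals exact Continuous.measurable (by fun_prop)
  have huG : ∀ t, ∀ z ∈ unitDisc, u t z = G (cexp ((c * t : ℝ) * I) * z) +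
      (-1) ^ k * G (cexp ((-(c * t) : ℝ) * I) * z) := by
    intro t z hz
    simp only [hu]
    rw [indicator_of_mem (hmem _ z hz), indicator_of_mem (hmem _ z hz)]
  have hM : ∀ t ∈ Ioi (0:ℝ), eN p α (u t) ≤ 2 * eN p α G := by
    intro t _
    rw [eN_congr (huG t)]
    refine (eN_add_le hp (hG.rot _).differentiableOn.continuousOn
      ((hG.rot _).const_mul _).differentiableOn.continuousOn).trans (le_of_eq ?_)
    rw [eN_const_mul, eN_rot' hG, eN_rot' hG]
    simp [two_mul]
  refine le_trans (le_of_eq (eN_congr fun z hz => ?_))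
    (eN_integral_le hp measurableSet_Ioi (Hf_integrable k) hum hM)
  unfold hfConv
  simp only [huG _ z hz]

/-- Favard-type estimate: the de la Vallée Poussin means of `g` approximate `g` to the order
`n^{-K}` in terms of `G = D_θ^K g`. For `K = 0` the zero polynomial suffices, since `C_0 ≥ 1`. -/
lemma exists_poly {p α : ℝ} (hp : 1 < p) {n : ℕ} (hn : 1 ≤ n) (K : ℕ) {a : ℕ → ℂ} {g G : ℂ → ℂ}
    (hg : HasPS a g) (hG : HasPS (fun j => (I * j) ^ K * a j) G) :
    ∃ P : Polynomial ℂ, P.natDegree ≤ n ∧ (ContinuousOn (fun z => g z - P.eval z) unitDisc) ∧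
      eN p α (fun z => g z - P.eval z) ≤ ENNReal.ofReal (Cc K * (2 / n) ^ K) * eN p α G := by
  have hcont : ∀ P : Polynomial ℂ, ContinuousOn (fun z => g z - P.eval z) unitDisc := fun P =>
    hg.differentiableOn.continuousOn.sub P.continuous.continuousOn
  cases K with
  | zero =>
    refine ⟨0, by simp, hcont 0, ?_⟩
    have h1 : (1:ENNReal) ≤ ENNReal.ofReal (Cc 0 * (2 / n) ^ 0) := by
      rw [pow_zero, mul_one]; exact ENNReal.one_le_ofReal.2 one_le_Cc_zero
    have h2 : eN p α (fun z => g z - Polynomial.eval z 0) = eN p α G := by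
      refine eN_congr fun z hz => ?_
      rw [Polynomial.eval_zero, sub_zero]
      exact hg.eq (hG.congr_coeff fun j => by simp) z hz
    rw [h2]
    exact le_mul_of_one_le_left zero_le h1
  | succ K =>
    set c : ℝ := 2 / n with hc
    have hn0 : (0:ℝ) < n := by exact_mod_cast hn
    have hc0 : 0 < c := by positivity
    -- `P` has Taylor multipliers `(2/π) F_0(2j/n)`, which vanish for `j ≥ n`.
    set q : ℕ → ℂ := fun j => (2 / Real.pi) * FH 0 (c * j) * a j with hq
    set P : Polynomial ℂ := ∑ j ∈ Finset.range n, Polynomial.monomial j (q j) with hP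
    have hq0 : ∀ j, j ∉ Finset.range n → q j = 0 := by
      intro j hj
      have hj : (n:ℝ) ≤ j := by simpa using hj
      have : 2 ≤ c * j := by
        rw [hc, div_mul_eq_mul_div, le_div_iff₀ hn0]; linarith
      simp only [hq]
      rw [FH_zero_of_two_le this]; ring
    have hPS : HasPS q fun z => P.eval z := by
      intro z _
      have : P.eval z = ∑ j ∈ Finset.range n, q j * z ^ j := by
        simp [hP, Polynomial.eval_finsetSum]
      change HasSum _ (P.eval z)
      rw [this]
      exact hasSum_sum_of_ne_finset_zero fun j hj => by rw [hq0 j hj, zero_mul]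
    set κ : ℝ := 2 / Real.pi * c ^ (K + 1) with hκ
    have hκ0 : 0 ≤ κ := by positivity
    have hpi : (Real.pi : ℂ) ≠ 0 := by exact_mod_cast Real.pi_ne_zero
    -- The error of the mean has Taylor multipliers `1 - (2/π) F_0(cj)`, which `FH_formula` turns into
    -- multipliers of `D_θ^{K+1} g`.
    have hR : ∀ z ∈ unitDisc, g z - P.eval z = (-κ : ℂ) * hfConv (K + 1) c G z := by
      refine (hg.sub hPS).eq (((hfConv_hasPS (K + 1) c hG).const_mul _).congr_coeff fun j => ?_)
      have := FH_formula K (c * j)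
      simp only [hq, hκ]
      push_cast at this ⊢
      rw [show (c * j * I : ℂ) = c * (I * j) by ring, mul_pow] at this
      have h2 : a j = (2 / Real.pi) * (Real.pi / 2) * a j := by field_simp
      linear_combination h2 + (2 / Real.pi) * a j * this
    refine ⟨P, ?_, hcont P, ?_⟩
    · refine Polynomial.natDegree_sum_le_of_forall_le _ _ fun j hj => ?_
      exact (Polynomial.natDegree_monomial_le _).trans (Finset.mem_range.1 hj).le
    · rw [eN_congr hR, eN_const_mul, norm_neg, Complex.norm_real, Real.norm_of_nonneg hκ0]
      refine (mul_le_mul_right (eN_hfConv_le hp (K + 1) c hG) _).trans (le_of_eq ?_)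
      have hI : 0 ≤ ∫ t in Ioi (0:ℝ), |Hf (K + 1) t| := integral_nonneg fun t => abs_nonneg _
      rw [show (2:ENNReal) = ENNReal.ofReal 2 by simp, ← mul_assoc, ← mul_assoc,
        ← ENNReal.ofReal_mul hκ0, ← ENNReal.ofReal_mul (by positivity)]
      congr 2
      rw [hκ, Cc]; ring

/-! ### Averages over rotations and the conclusion -/

lemma bNorm_nonneg {α : ℝ} (hα : -1 < α) (p : ℝ) (f : ℂ → ℂ) : 0 ≤ bNorm p α f :=
  Real.rpow_nonneg (setIntegral_nonneg measurableSet_unitDisc fun z hz =>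
    mul_nonneg (by positivity) (wt_nonneg hα hz)) _

lemma polyErr_le {p α : ℝ} (hα : -1 < α) {n : ℕ} {f : ℂ → ℂ} {P : Polynomial ℂ}
    (hP : P.natDegree ≤ n) :
    polyErr p α n f ≤ bNorm p α fun z => f z - P.eval z := by
  refine csInf_le ⟨0, ?_⟩ ⟨P, hP, rfl⟩
  rintro e ⟨Q, -, rfl⟩
  exact bNorm_nonneg hα _ _

/-- The modulus of continuity bounds the translates; the supremum defining it is finite because
rotations are isometries of `A^p_α`. -/
lemma eN_rot_sub_le {p α : ℝ} (hp : 1 < p) (hα : -1 < α) {b : ℕ → ℂ} {G : ℂ → ℂ} (hG : HasPS b G)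
    (hGp : MemAp p α G) {δ t : ℝ} (ht0 : 0 ≤ t) (ht : t ≤ δ) :
    eN p α (fun z => G (cexp (t * I) * z) - G z) ≤ ENNReal.ofReal (modCont p α δ G) := by
  have hfin := eN_lt_top hp hGp
  have h2 : ∀ s : ℝ, eN p α (fun z => G (cexp (s * I) * z) - G z) ≤ 2 * eN p α G := by
    intro s
    refine (eLpNorm_sub_le (aesm_bMeas (hG.rot s).differentiableOn.continuousOn)
      (aesm_bMeas hG.differentiableOn.continuousOn) (by simpa using hp.le)).trans (le_of_eq ?_)
    rw [two_mul]
    congr 1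
    exact eN_rot' hG s
  have htop : 2 * eN p α G ≠ ⊤ := ENNReal.mul_ne_top (by simp) hfin.ne
  have hb : ∀ s : ℝ, bNorm p α (fun z => G (cexp (s * I) * z) - G z) =
      (eN p α (fun z => G (cexp (s * I) * z) - G z)).toReal := fun s =>
    bNorm_eq hp hα ((hG.rot s).sub hG).differentiableOn.continuousOn
  rw [← ENNReal.ofReal_toReal (ne_top_of_le_ne_top htop (h2 t)), ← hb]
  refine ENNReal.ofReal_le_ofReal (le_csSup ⟨(2 * eN p α G).toReal, ?_⟩ ⟨t, ht0, ht, rfl⟩)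
  rintro r ⟨s, -, -, rfl⟩
  rw [hb]
  exact ENNReal.toReal_mono htop (h2 s)

/-- The multiplier of the average of the rotations by angles in `[0, h]`. -/
def avg (h : ℝ) (j : ℕ) : ℂ := ∫ t in Ioc 0 h, ((1 / h : ℝ) : ℂ) * cexp (j * t * I)

lemma integral_abs_one_div {h : ℝ} (hh : 0 < h) : ∫ _ in Ioc 0 h, |1 / h| = 1 := by
  rw [setIntegral_const, abs_of_pos (by positivity)]
  simp [hh.le, hh.ne']

lemma integrableOn_one_div (h : ℝ) : IntegrableOn (fun _ : ℝ => 1 / h) (Ioc 0 h) :=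
  integrableOn_const (by simp)

lemma avg_mul {h : ℝ} (hh : 0 < h) (j : ℕ) :
    I * j * avg h j = ((1 / h : ℝ) : ℂ) * (cexp (j * h * I) - 1) := by
  rcases eq_or_ne j 0 with rfl | hj
  · simp
  have hc : (j * I : ℂ) ≠ 0 := mul_ne_zero (by exact_mod_cast hj) I_ne_zero
  unfold avg
  rw [integral_const_mul, ← intervalIntegral.integral_of_le hh.le]
  have := integral_exp_mul_complex (a := 0) (b := h) hc
  have e : ∀ t : ℝ, cexp (j * t * I) = cexp (j * I * t) := fun t => by ring_nf
  simp only [e]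
  rw [this]
  field_simp
  simp

lemma one_sub_avg {h : ℝ} (hh : 0 < h) (j : ℕ) :
    ∫ t in Ioc 0 h, ((1 / h : ℝ) : ℂ) * (cexp (j * t * I) - 1) = avg h j - 1 := by
  have h1 : IntegrableOn (fun t : ℝ => ((1 / h : ℝ) : ℂ) * cexp (j * t * I)) (Ioc 0 h) :=
    (Continuous.integrableOn_Icc (by fun_prop)).mono_set Ioc_subset_Icc_self
  have h2 : IntegrableOn (fun t : ℝ => ((1 / h : ℝ) : ℂ)) (Ioc 0 h) := integrableOn_const (by simp)
  simp only [mul_sub, mul_one]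
  rw [integral_sub h1 h2, avg, setIntegral_const]
  congr 1
  simp [hh.le, hh.ne']

lemma norm_exp_mul_I (j : ℕ) (t : ℝ) : ‖cexp (j * t * I)‖ = 1 := by
  have := Complex.norm_exp_ofReal_mul_I (j * t)
  push_cast at this
  exact this

/-- `G_h - G`, where `G_h` is the average of the rotations of `G` by angles in `[0, h]`, is bounded
by the largest rotation increment. -/
lemma eN_avg_sub_le {p α : ℝ} (hp : 1 < p) {b : ℕ → ℂ} {G : ℂ → ℂ} (hG : HasPS b G) {h : ℝ}
    (hh : 0 < h) {M : ENNReal}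
    (hM : ∀ t : ℝ, 0 ≤ t → t ≤ h → eN p α (fun z => G (cexp (t * I) * z) - G z) ≤ M) :
    ∃ G' : ℂ → ℂ, HasPS (fun j => b j * (avg h j - 1)) G' ∧ eN p α G' ≤ M := by
  set u : ℝ → ℂ → ℂ := fun t z =>
    unitDisc.indicator G (cexp (t * I) * z) - unitDisc.indicator G z with hu
  have hum : Measurable (Function.uncurry u) := by
    have hm := hG.measurable_indicator
    refine Measurable.sub (hm.comp ?_) (hm.comp measurable_snd)
    exact Continuous.measurable (by fun_prop)
  have huG : ∀ t, ∀ z ∈ unitDisc, u t z = G (cexp (t * I) * z) - G z := by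
    intro t z hz
    simp only [hu]
    rw [indicator_of_mem hz,
      indicator_of_mem ((mul_mem_unitDisc (Complex.norm_exp_ofReal_mul_I t)).2 hz)]
  refine ⟨fun z => ∫ t in Ioc 0 h, ((1 / h : ℝ) : ℂ) * u t z, ?_, ?_⟩
  · refine (hG.integral (e := fun j t => cexp (j * t * I) - 1) (C := 2) (k := fun _ => 1 / h)
      (integrableOn_one_div h) (fun j => by fun_prop) (fun j t => ?_) (fun t => ?_)).congr_coeff
      fun j => by rw [one_sub_avg hh]
    · refine (norm_sub_le _ _).trans ?_
      rw [norm_exp_mul_I]; norm_num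
    · exact (((hG.rot t).sub hG).congr_fun (huG t)).congr_coeff fun j => by ring
  · have := eN_integral_le (M := M) hp (measurableSet_Ioc (a := 0) (b := h)) (k := fun _ => 1 / h)
      (integrableOn_one_div h) hum fun t ht => by
        rw [eN_congr (huG t)]; exact hM t ht.1.le ht.2
    rwa [integral_abs_one_div hh, ENNReal.ofReal_one, one_mul] at this

/-- If `D_θ^K f ∈ A^p_α` has modulus of continuity `ω_{p,α}`, then
`E_n^{p,α}(f) ≤ B_K ω_{p,α}(2π/n, D_θ^K f) n^{-K}` for every `n ≥ 1`. -/
theorem polyErr_le_of_modulus_of_continuity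
    (p α : ℝ) (hp : 1 < p) (hα : -1 < α) (K : ℕ)
    (f : ℂ → ℂ) (hf : MemAp p α f) (hDf : MemAp p α (Dth^[K] f))
    (n : ℕ) (hn : 1 ≤ n) :
    polyErr p α n f
      ≤ Bcoef K * modCont p α (2 * Real.pi / n) (Dth^[K] f) * (n : ℝ) ^ (-(K : ℝ)) := by
  set G : ℂ → ℂ := Dth^[K] f with hGdef
  have hn0 : (0:ℝ) < n := by exact_mod_cast hn
  obtain ⟨a, ha⟩ := exists_hasPS hf.1
  have hG : HasPS (fun j => (I * j) ^ K * a j) G := ha.dth_iterate K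
  set h : ℝ := 2 * Real.pi / n with hh_def
  have hh : 0 < h := by positivity
  set ω : ℝ := modCont p α h G with hω_def
  have hω0 : 0 ≤ ω := by
    refine Real.sSup_nonneg ?_
    rintro r ⟨t, -, -, rfl⟩
    exact bNorm_nonneg hα _ _
  have hω : ∀ t : ℝ, 0 ≤ t → t ≤ h →
      eN p α (fun z => G (cexp (t * I) * z) - G z) ≤ ENNReal.ofReal ω :=
    fun t h0 h1 => eN_rot_sub_le hp hα hG hDf h0 h1
  -- The average `g₁ = f_h`, and the remainder `f - g₁`.
  set g₁ : ℂ → ℂ := fun z => ∫ t in Ioc 0 h, ((1 / h : ℝ) : ℂ) * f (cexp (t * I) * z) with hg₁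
  have hg1 : HasPS (fun j => a j * avg h j) g₁ :=
    ha.integral (e := fun j t => cexp (j * t * I)) (C := 1) (k := fun _ => 1 / h)
      (integrableOn_one_div h) (fun j => by fun_prop) (fun j t => (norm_exp_mul_I j t).le)
      (fun t => ha.rot t)
  have hg2 : HasPS (fun j => a j * (1 - avg h j)) (fun z => f z - g₁ z) :=
    (ha.sub hg1).congr_coeff fun j => by ring
  -- `D_θ^{K+1} f_h` is the difference quotient of `D_θ^K f` with step `h`.
  have hG1 : HasPS (fun j => (I * j) ^ (K + 1) * (a j * avg h j))
      (fun z => ((1 / h : ℝ) : ℂ) * (G (cexp (h * I) * z) - G z)) := by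
    refine (((hG.rot h).sub hG).const_mul ((1 / h : ℝ) : ℂ)).congr_coeff fun j => ?_
    have := avg_mul hh j
    rw [pow_succ]
    linear_combination (I * j) ^ K * a j * this
  obtain ⟨G₂, hG2, hG2M⟩ := eN_avg_sub_le hp hG hh hω
  have hG2' : HasPS (fun j => (I * j) ^ K * (a j * (1 - avg h j))) (fun z => (-1) * G₂ z) :=
    (hG2.const_mul (-1)).congr_coeff fun j => by ring
  obtain ⟨P₁, hP1, hc1, he1⟩ := exists_poly (α := α) hp hn (K + 1) hg1 hG1
  obtain ⟨P₂, hP2, hc2, he2⟩ := exists_poly (α := α) hp hn K hg2 hG2'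
  have hC : ∀ k, 0 ≤ Cc k := fun k =>
    mul_nonneg (by positivity) (integral_nonneg fun t => abs_nonneg _)
  have hB1 : 0 ≤ Cc (K + 1) * (2 / n) ^ (K + 1) := mul_nonneg (hC _) (by positivity)
  have hB2 : 0 ≤ Cc K * (2 / n) ^ K := mul_nonneg (hC _) (by positivity)
  have hsum : eN p α (fun z => f z - (P₁ + P₂).eval z) ≤
      ENNReal.ofReal (Cc (K + 1) * (2 / n) ^ (K + 1) * (1 / h * ω) + Cc K * (2 / n) ^ K * ω) := by
    have e : (fun z => f z - (P₁ + P₂).eval z) =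
        fun z => (g₁ z - P₁.eval z) + ((f z - g₁ z) - P₂.eval z) := by
      funext z; rw [Polynomial.eval_add]; ring
    rw [e, ENNReal.ofReal_add (by positivity) (by positivity)]
    refine (eN_add_le hp hc1 hc2).trans (add_le_add (he1.trans ?_) (he2.trans ?_))
    · rw [ENNReal.ofReal_mul hB1, eN_const_mul, Complex.norm_real,
        Real.norm_of_nonneg (by positivity),
        ENNReal.ofReal_mul (show (0:ℝ) ≤ 1 / h by positivity)]
      gcongr
      exact hω h hh.le le_rfl
    · rw [ENNReal.ofReal_mul hB2, eN_const_mul]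
      simpa using mul_le_mul_right hG2M _
  have hdeg : (P₁ + P₂).natDegree ≤ n := Polynomial.natDegree_add_le_of_degree_le hP1 hP2
  refine (polyErr_le hα hdeg).trans ?_
  rw [bNorm_eq hp hα (f := fun z => f z - (P₁ + P₂).eval z)
    (hf.1.continuousOn.sub (P₁ + P₂).continuous.continuousOn)]
  refine (ENNReal.toReal_le_of_le_ofReal (by positivity) hsum).trans (le_of_eq ?_)
  rw [Bcoef, Real.rpow_neg hn0.le, Real.rpow_natCast, hh_def]
  have hpi := Real.pi_ne_zero
  rw [div_pow, div_pow, pow_succ, pow_succ]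
  field_simp
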